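/- Let w ≥ 5 be an integer. Then Σ_{a+b+c+d=w, a≥2, b,c,d≥1} 2^{a+c}·(2^{a−1}·3^b − 3^b − 1)·ζ(a,b,c,d) = (2 + (w−3)(w+2)(w+7)/12)·ζ(w). -/

import Mathlib

/-- The multiple zeta value `ζ(s₁,…,s_d) = Σ_{k₁>⋯>k_d≥1} 1/(k₁^{s₁}⋯k_d^{s_d})`. -/
noncomputable def mzv {d : ℕ} (s : Fin d → ℕ) : ℝ :=
  ∑' k : {k : Fin d → ℕ // StrictAnti k ∧ ∀ i, 0 < k i},
    ∏ i, (1 : ℝ) / (k.1 i : ℝ) ^ s i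

/-!
Let `x` mark the weight. The left-hand sides have as generating function a combination of nested
sums with letters `1/(k - c x)`, `0 ≤ c ≤ 4`, that is of iterated integrals at `t = 1`. The shuffle
relations identify this combination, already as a function of `t`, with the fourth power sum
`-4 [s⁴] log W` of the generating series `W = ∑ s^m I(…, 0, x, 0, x)` of the alternating iterated
integrals of length `m`. The differential equation of `W` gives `W = (1 - t)^{-s} F`, where
`F = ₂F₁(-s-α, -s-β; 1-x; t)` with `α + β = x` and `αβ = -s²`, and the exponential factor does not
contribute to the power sum. As in Gauss's summation theorem, contiguity relations telescope to
`F(1) = ∏_{k ≥ 1} (1 + s (1/(k-x) + 1/k)) / (1 + 2s/k)`, so the power sum at `t = 1` is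
`∑_k ((1/(k-x) + 1/k)⁴ - (2/k)⁴)`, whose expansion in powers of `x` consists of multiples of single
zeta values.
-/

open Finset Filter Topology Asymptotics PowerSeries

/-- The letter of the nested sums below: the sequence `1/(n + 1 - y)`, that is `1/(k - y)` for the
summation variable `k = n + 1 ≥ 1`. -/
noncomputable def recip (y : ℝ) (n : ℕ) : ℝ := (n + 1 - y)⁻¹

/-- The nested sum `∑_{n > k₁ > ⋯ > k_d ≥ 0} f₁(k₁) ⋯ f_d(k_d)` of a list `[f₁, …, f_d]`. -/
def strictSum : List (ℕ → ℝ) → ℕ → ℝ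
  | [], _ => 1
  | f :: l, n => ∑ k ∈ range n, f k * strictSum l k

section Recip

variable {x y : ℝ}

lemma recip_den_pos (hy : y < 1) (n : ℕ) : 0 < (n : ℝ) + 1 - y := by
  have : (0 : ℝ) ≤ n := n.cast_nonneg
  linarith

lemma recip_pos (hy : y < 1) (n : ℕ) : 0 < recip y n := inv_pos.2 (recip_den_pos hy n)

lemma mul_recip (hy : y < 1) (n : ℕ) : (n + 1 - y) * recip y n = 1 :=
  mul_inv_cancel₀ (recip_den_pos hy n).ne'

lemma succ_mul_recip_zero (n : ℕ) : (n + 1 : ℝ) * recip 0 n = 1 := by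
  simpa using mul_recip zero_lt_one n

lemma recip_sub_recip (hx : x < 1) (hy : y < 1) (n : ℕ) :
    recip x n - recip y n = (x - y) * (recip x n * recip y n) := by
  linear_combination recip y n * mul_recip hx n - recip x n * mul_recip hy n

lemma recip_le (hy0 : 0 ≤ y) (hy : y < 1) (n : ℕ) : recip y n ≤ (1 - y)⁻¹ * recip 0 n := by
  rw [recip, recip, ← mul_inv, sub_zero]
  exact inv_anti₀ (mul_pos (by linarith) (by positivity))
    (by nlinarith [n.cast_nonneg (α := ℝ)])

end Recip

section Growth

/-- The comparison sequence `√(n + 1)`: it dominates every nested sum with letters `O(1/n)`, all of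
which are in fact of logarithmic size. -/
noncomputable def sqrtSucc (n : ℕ) : ℝ := √(n + 1)

lemma sqrtSucc_pos (n : ℕ) : 0 < sqrtSucc n := Real.sqrt_pos.2 (by positivity)

lemma recip_zero_mul_sqrtSucc (n : ℕ) : recip 0 n * sqrtSucc n = (sqrtSucc n)⁻¹ := by
  rw [recip, sub_zero, sqrtSucc, ← Real.sqrt_div_self, div_eq_inv_mul]

lemma sum_inv_sqrtSucc_le (n : ℕ) : ∑ k ∈ range n, (sqrtSucc k)⁻¹ ≤ 2 * √n := by
  induction n with
  | zero => simp
  | succ n ih =>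
    have hle : √(n : ℝ) ≤ √(n + 1) := Real.sqrt_le_sqrt (by simp)
    have hn := Real.sq_sqrt (n.cast_nonneg : (0 : ℝ) ≤ n)
    have hn1 := Real.sq_sqrt (by positivity : (0 : ℝ) ≤ n + 1)
    have hstep : (sqrtSucc n)⁻¹ ≤ 2 * (√(n + 1) - √n) := by
      rw [inv_le_iff_one_le_mul₀ (sqrtSucc_pos n), sqrtSucc]
      nlinarith [hle, sq_nonneg (√((n : ℝ) + 1) - √n)]
    rw [sum_range_succ, Nat.cast_succ]
    linarith

variable {f g : ℕ → ℝ}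

lemma isBigO_sum_range_mul (hf : f =O[⊤] recip 0) (hg : g =O[⊤] sqrtSucc) :
    (fun n => ∑ k ∈ range n, f k * g k) =O[⊤] sqrtSucc := by
  obtain ⟨C, hC⟩ := isBigO_top.1 (hf.mul hg)
  have hC' (k : ℕ) : ‖f k * g k‖ ≤ |C| * (sqrtSucc k)⁻¹ := by
    refine (hC k).trans ?_
    rw [recip_zero_mul_sqrtSucc, Real.norm_of_nonneg (inv_nonneg.2 (sqrtSucc_pos k).le)]
    gcongr
    exacts [inv_nonneg.2 (sqrtSucc_pos k).le, le_abs_self C]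
  refine isBigO_top.2 ⟨|C| * 2, fun n => ?_⟩
  calc ‖∑ k ∈ range n, f k * g k‖
      ≤ ∑ k ∈ range n, |C| * (sqrtSucc k)⁻¹ := norm_sum_le_of_le _ fun k _ => hC' k
    _ ≤ |C| * (2 * √n) := by
        rw [← mul_sum]
        gcongr
        exact sum_inv_sqrtSucc_le n
    _ ≤ |C| * 2 * ‖sqrtSucc n‖ := by
        rw [Real.norm_of_nonneg (sqrtSucc_pos n).le, mul_assoc, sqrtSucc]
        gcongr
        simp

lemma isBigO_strictSum {l : List (ℕ → ℝ)} (hl : ∀ f ∈ l, f =O[⊤] recip 0) :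
    strictSum l =O[⊤] sqrtSucc := by
  induction l with
  | nil =>
    refine isBigO_top.2 ⟨1, fun n => ?_⟩
    rw [strictSum, one_mul, norm_one, Real.norm_of_nonneg (sqrtSucc_pos n).le, sqrtSucc]
    exact Real.one_le_sqrt.2 (by simp)
  | cons f l ih =>
    rw [List.forall_mem_cons] at hl
    exact isBigO_sum_range_mul hl.1 (ih hl.2)

lemma summable_mul_of_isBigO (hf : f =O[⊤] (recip 0 ^ 2)) (hg : g =O[⊤] sqrtSucc) :
    Summable fun n => f n * g n := by
  have hs : Summable fun n : ℕ => 1 / |(n : ℝ) + 1| ^ (3 / 2 : ℝ) :=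
    (Real.summable_one_div_nat_add_rpow 1 (3 / 2)).2 (by norm_num)
  refine summable_of_isBigO_nat hs (((hf.mul hg).mono le_top).congr_right fun n => ?_)
  have hn : (0 : ℝ) < n + 1 := by positivity
  have hpow : ((n : ℝ) + 1) ^ (3 / 2 : ℝ) = (n + 1) * √(n + 1) := by
    rw [Real.sqrt_eq_rpow, ← Real.rpow_one_add' hn.le (by norm_num)]
    norm_num
  rw [abs_of_pos hn, hpow, Pi.pow_apply, sq, mul_assoc, recip_zero_mul_sqrtSucc, recip, sub_zero,
    sqrtSucc, one_div, mul_inv]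

lemma tendsto_recip (y : ℝ) : Tendsto (recip y) atTop (𝓝 0) := by
  refine (tendsto_inv_atTop_zero.comp (tendsto_atTop_add_const_right atTop (1 - y)
    tendsto_natCast_atTop_atTop)).congr fun n => ?_
  rw [Function.comp_apply, recip, add_sub_assoc]

lemma tendsto_mul_of_isBigO (hf : f =O[⊤] recip 0) (hg : g =O[⊤] sqrtSucc) :
    Tendsto (fun n => f n * g n) atTop (𝓝 0) := by
  refine ((hf.mul hg).mono le_top).trans_tendsto ?_
  simp only [recip_zero_mul_sqrtSucc]
  exact tendsto_inv_atTop_zero.comp (Real.tendsto_sqrt_atTop.comp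
    (tendsto_atTop_add_const_right atTop (1 : ℝ) tendsto_natCast_atTop_atTop))

lemma isBigO_recip {y : ℝ} (hy0 : 0 ≤ y) (hy : y < 1) : recip y =O[⊤] recip 0 :=
  isBigO_top.2 ⟨(1 - y)⁻¹, fun n => by
    rw [Real.norm_of_nonneg (recip_pos hy n).le, Real.norm_of_nonneg (recip_pos zero_lt_one n).le]
    exact recip_le hy0 hy n⟩

lemma isBigO_recip_sub_recip {x y : ℝ} (hx0 : 0 ≤ x) (hx : x < 1) (hy0 : 0 ≤ y) (hy : y < 1) :
    (fun n => recip x n - recip y n) =O[⊤] (recip 0 ^ 2) := by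
  simp only [recip_sub_recip hx hy, sq]
  exact ((isBigO_recip hx0 hx).mul (isBigO_recip hy0 hy)).const_mul_left (x - y)

end Growth

section Integration

variable {f g u : ℝ⟦X⟧} {y z : ℝ}

/-- The Euler operator `θ = t d/dt` on power series in `t`. -/
noncomputable def euler : Derivation ℝ ℝ⟦X⟧ ℝ⟦X⟧ := (X : ℝ⟦X⟧) • d⁄dX ℝ

lemma coeff_euler (n : ℕ) (f : ℝ⟦X⟧) : coeff n (euler f) = n * coeff n f := by
  rw [euler, Derivation.smul_apply, smul_eq_mul]
  cases n with
  | zero => simp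
  | succ n => rw [coeff_succ_X_mul, coeff_derivative, Nat.cast_succ, mul_comm]

/-- The series `t/(1 - t)`, multiplication by which turns coefficients into their partial sums. -/
noncomputable def geomTail : ℝ⟦X⟧ := X * PowerSeries.mk 1

lemma coeff_geomTail_mul (n : ℕ) (f : ℝ⟦X⟧) :
    coeff n (geomTail * f) = ∑ k ∈ range n, coeff k f := by
  rw [geomTail, mul_assoc]
  cases n with
  | zero => simp
  | succ n =>
    rw [coeff_succ_X_mul, mul_comm, coeff_mul, Nat.sum_antidiagonal_eq_sum_range_succ_mk]
    simp

/-- The solution operator of `θ u = y u + t/(1-t) f`: for `y < 1` the unique solution without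
constant term is `u = integ y f`, in analytic terms `t^y ∫₀ᵗ s^{-y} f(s) ds/(1-s)`. -/
noncomputable def integ (y : ℝ) : ℝ⟦X⟧ →ₗ[ℝ] ℝ⟦X⟧ where
  toFun f := PowerSeries.mk fun n => coeff n (geomTail * f) / (n - y)
  map_add' f g := by
    ext n
    simp only [mul_add, map_add, coeff_mk, add_div]
  map_smul' c f := by
    ext n
    simp only [mul_smul_comm, map_smul, coeff_mk, RingHom.id_apply, smul_eq_mul, mul_div_assoc]

lemma coeff_integ (n : ℕ) (y : ℝ) (f : ℝ⟦X⟧) :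
    coeff n (integ y f) = coeff n (geomTail * f) / (n - y) :=
  coeff_mk n fun n => coeff n (geomTail * f) / (n - y)

lemma constantCoeff_integ (y : ℝ) (f : ℝ⟦X⟧) : constantCoeff (integ y f) = 0 := by
  rw [← coeff_zero_eq_constantCoeff_apply, coeff_integ, coeff_geomTail_mul,
    range_zero, sum_empty, zero_div]

lemma coeff_succ_integ (n : ℕ) (y : ℝ) (f : ℝ⟦X⟧) :
    coeff (n + 1) (integ y f) = recip y n * ∑ k ∈ range (n + 1), coeff k f := by
  rw [coeff_integ, coeff_geomTail_mul, recip, Nat.cast_succ, div_eq_inv_mul]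

lemma eq_integ (hy : y < 1) (h0 : constantCoeff u = 0) (hu : euler u = y • u + geomTail * f) :
    u = integ y f := by
  ext n
  cases n with
  | zero => simp only [coeff_zero_eq_constantCoeff, h0, constantCoeff_integ]
  | succ n =>
    have hn := congrArg (coeff (n + 1)) hu
    have hden := recip_den_pos hy n
    rw [coeff_euler, map_add, coeff_smul, smul_eq_mul] at hn
    rw [coeff_integ, eq_div_iff (by push_cast; exact hden.ne')]
    linear_combination hn

lemma euler_integ (hy : y < 1) (f : ℝ⟦X⟧) :
    euler (integ y f) = y • integ y f + geomTail * f := by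
  ext n
  rw [coeff_euler, map_add, coeff_smul, smul_eq_mul]
  cases n with
  | zero => simp [constantCoeff_integ, geomTail]
  | succ n =>
    have hden := recip_den_pos hy n
    rw [coeff_integ]
    push_cast
    field_simp
    ring

lemma integ_mul_integ (hy : y < 1) (hz : z < 1) (hyz : y + z < 1) (f g : ℝ⟦X⟧) :
    integ y f * integ z g = integ (y + z) (f * integ z g + integ y f * g) := by
  refine eq_integ hyz (by rw [map_mul, constantCoeff_integ, zero_mul]) ?_
  rw [Derivation.leibniz, euler_integ hy, euler_integ hz]
  simp only [smul_eq_mul, add_smul, mul_add, mul_smul_comm]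
  ring_nf

/-- The iterated integral `integ y₁ (integ y₂ (⋯ (integ y_d 1)))`, the generating function in `t` of
a nested sum with letters `recip yᵢ`. -/
noncomputable def word (l : List ℝ) : ℝ⟦X⟧ := l.foldr (fun y f => integ y f) 1

lemma word_cons (y : ℝ) (l : List ℝ) : word (y :: l) = integ y (word l) := rfl

lemma constantCoeff_word_cons (y : ℝ) (l : List ℝ) : constantCoeff (word (y :: l)) = 0 :=
  constantCoeff_integ y (word l)

lemma word_singleton (y : ℝ) : word [y] = integ y 1 := rfl

lemma sum_range_coeff_word (l : List ℝ) (n : ℕ) :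
    ∑ k ∈ range (n + 1), coeff k (word l) = strictSum (l.map recip) n := by
  induction l generalizing n with
  | nil => simp [word, strictSum, coeff_one]
  | cons y l ih =>
    rw [sum_range_succ', word_cons, coeff_zero_eq_constantCoeff_apply,
      constantCoeff_integ, add_zero]
    simp only [coeff_succ_integ, ih]
    rfl

lemma coeff_succ_word_cons (y : ℝ) (l : List ℝ) (n : ℕ) :
    coeff (n + 1) (word (y :: l)) = recip y n * strictSum (l.map recip) n := by
  rw [word_cons, coeff_succ_integ, sum_range_coeff_word]

/-- The letters `[m y, …, 2 y, y]` of the word that represents the `m`-th power of `integ y 1`. -/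
def multiples (y : ℝ) : ℕ → List ℝ
  | 0 => []
  | m + 1 => (m + 1) * y :: multiples y m

lemma word_multiples_succ (y : ℝ) (m : ℕ) :
    word (multiples y (m + 1)) = integ ((m + 1) * y) (word (multiples y m)) := rfl

lemma word_singleton_mul_word_multiples (hy0 : 0 ≤ y) (m : ℕ) (hm : (m + 1) * y < 1) :
    word [y] * word (multiples y m) = (m + 1) • word (multiples y (m + 1)) := by
  induction m with
  | zero => simp [multiples, word]
  | succ m ih =>
    push_cast at hm
    have hmy : 0 ≤ m * y := by positivity
    have hshift : y + (m + 1) * y = ((m + 1 : ℕ) + 1) * y := by push_cast; ring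
    rw [word_singleton, word_multiples_succ,
      integ_mul_integ (by linarith) (by linarith) (by linarith), one_mul, ← word_multiples_succ,
      ← word_singleton, ih (by linarith), ← succ_nsmul', map_nsmul,
      word_multiples_succ y (m + 1), hshift]

lemma word_singleton_pow (hy0 : 0 ≤ y) (m : ℕ) (hm : m * y < 1) :
    word [y] ^ m = m.factorial • word (multiples y m) := by
  induction m with
  | zero => simp [multiples, word]
  | succ m ih =>
    push_cast at hm
    rw [pow_succ', ih (by linarith), mul_smul_comm, word_singleton_mul_word_multiples hy0 m hm,
      smul_smul, Nat.factorial_succ, mul_comm]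

end Integration

section PowerSum

variable {A : Type*} [CommRing A] {U V : A⟦X⟧}

/-- The fourth power sum `∑ aᵢ⁴` of a formal product `U = ∏ (1 + aᵢ X)`, that is `-4 [X⁴] log U`,
written in the coefficients of `U` by Newton's identities. -/
noncomputable def powerSumFour (U : A⟦X⟧) : A :=
  coeff 1 U ^ 4 - 4 * coeff 1 U ^ 2 * coeff 2 U + 2 * coeff 2 U ^ 2 + 4 * coeff 1 U * coeff 3 U
    - 4 * coeff 4 U

lemma powerSumFour_mul (hU : constantCoeff U = 1) (hV : constantCoeff V = 1) :
    powerSumFour (U * V) = powerSumFour U + powerSumFour V := by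
  simp only [powerSumFour, coeff_mul, Nat.sum_antidiagonal_eq_sum_range_succ_mk, sum_range_succ,
    range_zero, sum_empty, Nat.succ_eq_add_one, Nat.reduceAdd, Nat.reduceSub, tsub_zero,
    coeff_zero_eq_constantCoeff, hU, hV]
  ring

lemma map_powerSumFour {B : Type*} [CommRing B] (φ : A →+* B) (U : A⟦X⟧) :
    φ (powerSumFour U) = powerSumFour (PowerSeries.map φ U) := by
  simp only [powerSumFour, map_add, map_sub, map_mul, map_pow, map_ofNat, coeff_map]

lemma powerSumFour_one_add_C_mul_X (a : A) : powerSumFour (1 + C a * X) = a ^ 4 := by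
  simp [powerSumFour, coeff_one]

lemma powerSumFour_rescale_exp [Algebra ℚ A] (a : A) : powerSumFour (rescale a (exp A)) = 0 := by
  set q := algebraMap ℚ A (1 / 24) with hq
  have hone : 24 * q = 1 := by rw [hq, ← map_ofNat (algebraMap ℚ A) 24, ← map_mul]; norm_num
  have htwo : algebraMap ℚ A (1 / 2) = 12 * q := by
    rw [hq, ← map_ofNat (algebraMap ℚ A) 12, ← map_mul]; norm_num
  have hsix : algebraMap ℚ A (1 / 6) = 4 * q := by
    rw [hq, ← map_ofNat (algebraMap ℚ A) 4, ← map_mul]; norm_num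
  simp only [powerSumFour, coeff_rescale, coeff_exp, Nat.factorial, Nat.succ_eq_add_one,
    Nat.reduceAdd, Nat.reduceMul, Nat.cast_one, Nat.cast_ofNat, htwo, hsix, ← hq, div_one, map_one]
  linear_combination a ^ 4 * (12 * q - 1) * hone

end PowerSum

section EulerCoeff

/-- The action of the Euler operator on the coefficients of a power series. -/
noncomputable def eulerCoeff (U : ℝ⟦X⟧⟦X⟧) : ℝ⟦X⟧⟦X⟧ := PowerSeries.mk fun m => euler (coeff m U)

lemma eulerCoeff_sub (U V : ℝ⟦X⟧⟦X⟧) : eulerCoeff (U - V) = eulerCoeff U - eulerCoeff V := by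
  ext1 m
  simp only [eulerCoeff, coeff_mk, map_sub]

lemma eulerCoeff_mul (U V : ℝ⟦X⟧⟦X⟧) :
    eulerCoeff (U * V) = U * eulerCoeff V + eulerCoeff U * V := by
  ext1 m
  simp only [eulerCoeff, map_add, coeff_mul, coeff_mk, map_sum, Derivation.leibniz, smul_eq_mul,
    ← sum_add_distrib]
  exact sum_congr rfl fun p _ => by ring

lemma eulerCoeff_rescale_exp (f : ℝ⟦X⟧) :
    eulerCoeff (rescale f (exp ℝ⟦X⟧)) = X * C (euler f) * rescale f (exp ℝ⟦X⟧) := by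
  ext1 m
  rw [mul_assoc]
  cases m with
  | zero => simp [eulerCoeff, coeff_rescale]
  | succ m =>
    rw [eulerCoeff, coeff_mk, coeff_succ_X_mul, coeff_C_mul, coeff_rescale, coeff_rescale]
    have hfac : (1 / m.factorial : ℚ) = (m + 1) * (1 / (m + 1).factorial) := by
      rw [Nat.factorial_succ]
      push_cast
      field_simp
    have hconst (q : ℚ) : euler (algebraMap ℚ ℝ⟦X⟧ q) = 0 := by
      rw [IsScalarTower.algebraMap_apply ℚ ℝ ℝ⟦X⟧, Derivation.map_algebraMap]
    simp only [coeff_exp, Derivation.leibniz, Derivation.leibniz_pow, hconst, hfac, map_mul,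
      map_add, map_natCast, map_one, smul_eq_mul, nsmul_eq_mul, add_tsub_cancel_right]
    push_cast
    ring

lemma constantCoeff_rescale_exp (f : ℝ⟦X⟧) : constantCoeff (rescale f (exp ℝ⟦X⟧)) = 1 := by
  rw [← coeff_zero_eq_constantCoeff_apply, coeff_rescale]
  simp

lemma map_constantCoeff_rescale_exp {f : ℝ⟦X⟧} (hf : constantCoeff f = 0) :
    PowerSeries.map constantCoeff (rescale f (exp ℝ⟦X⟧)) = 1 := by
  ext m
  cases m <;> simp [hf]

end EulerCoeff

section GaussSeries

variable {x : ℝ}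

/-- `gaussCoeff x m n` is the coefficient of `s^m` in `∏_{j<n} (1 - s (recip x j + recip 0 j))`. -/
noncomputable def gaussCoeff (x : ℝ) (m : ℕ) : ℕ → ℝ :=
  strictSum (List.replicate m fun n => -(recip x n + recip 0 n))

lemma gaussCoeff_zero (x : ℝ) (n : ℕ) : gaussCoeff x 0 n = 1 := rfl

lemma gaussCoeff_succ (x : ℝ) (m n : ℕ) :
    gaussCoeff x (m + 1) n = ∑ k ∈ range n, -(recip x k + recip 0 k) * gaussCoeff x m k := rfl

lemma isBigO_gaussCoeff (hx0 : 0 ≤ x) (hx : x < 1) (m : ℕ) : gaussCoeff x m =O[⊤] sqrtSucc := by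
  refine isBigO_strictSum fun f hf => ?_
  rw [List.eq_of_mem_replicate hf]
  exact ((isBigO_recip hx0 hx).add (isBigO_refl (recip 0) ⊤)).neg_left

/-- `1 + ∑_{m,n} (recip x n - recip 0 n) e_m(n) t^{n+1} s^{m+1}` with `e = gaussCoeff x`, as a
series in `s` over the series in `t`: the hypergeometric function `₂F₁(-s-α, -s-β; 1-x; t)`, where
`α + β = x` and `αβ = -s²`. -/
noncomputable def gaussSeries (x : ℝ) : ℝ⟦X⟧⟦X⟧ := PowerSeries.mk fun
  | 0 => 1
  | m + 1 => X * PowerSeries.mk fun n => (recip x n - recip 0 n) * gaussCoeff x m n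

/-- The series `x⁻¹ θ F` for `F = gaussSeries x`. -/
noncomputable def gaussSeriesDeriv (x : ℝ) : ℝ⟦X⟧⟦X⟧ := PowerSeries.mk fun
  | 0 => 0
  | m + 1 => X * PowerSeries.mk fun n => recip x n * gaussCoeff x m n

lemma constantCoeff_gaussSeries (x : ℝ) : constantCoeff (gaussSeries x) = 1 := by
  simp [gaussSeries]

lemma constantCoeff_gaussSeriesDeriv (x : ℝ) : constantCoeff (gaussSeriesDeriv x) = 0 := by
  simp [gaussSeriesDeriv]

lemma map_constantCoeff_gaussSeries (x : ℝ) :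
    PowerSeries.map constantCoeff (gaussSeries x) = 1 := by
  ext m
  cases m <;> simp [gaussSeries, coeff_one]

lemma map_constantCoeff_gaussSeriesDeriv (x : ℝ) :
    PowerSeries.map constantCoeff (gaussSeriesDeriv x) = 0 := by
  ext m
  cases m <;> simp [gaussSeriesDeriv]

lemma eulerCoeff_gaussSeries (hx : x < 1) :
    eulerCoeff (gaussSeries x) = C (C x) * gaussSeriesDeriv x := by
  ext m n
  rw [eulerCoeff, coeff_mk, coeff_euler, coeff_C_mul, coeff_C_mul, gaussSeries, gaussSeriesDeriv,
    coeff_mk, coeff_mk]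
  rcases m with _ | m
  · simp [coeff_one]
  rcases n with _ | n
  · simp
  rw [coeff_succ_X_mul, coeff_succ_X_mul, coeff_mk, coeff_mk, recip_sub_recip hx zero_lt_one]
  push_cast
  linear_combination x * recip x n * gaussCoeff x m n * succ_mul_recip_zero n

lemma sum_range_coeff_gaussSeries_sub (x : ℝ) (m n : ℕ) :
    ∑ k ∈ range (n + 1), coeff k (coeff m (gaussSeries x) - 2 * coeff m (gaussSeriesDeriv x)) =
      gaussCoeff x m n := by
  rw [gaussSeries, gaussSeriesDeriv, coeff_mk, coeff_mk]
  rcases m with _ | m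
  · simp [coeff_one, gaussCoeff_zero]
  rw [sum_range_succ', gaussCoeff_succ]
  simp only [← map_ofNat (C (R := ℝ)) 2, map_sub, coeff_C_mul, coeff_succ_X_mul, coeff_mk,
    coeff_zero_X_mul, mul_zero, sub_zero, add_zero]
  exact sum_congr rfl fun k _ => by ring

lemma eulerCoeff_gaussSeriesDeriv (hx : x < 1) :
    eulerCoeff (gaussSeriesDeriv x) = C (C x) * gaussSeriesDeriv x +
      X * C geomTail * (gaussSeries x - C 2 * gaussSeriesDeriv x) := by
  ext m n
  rw [eulerCoeff, coeff_mk, coeff_euler, map_add, map_add, coeff_C_mul, coeff_C_mul, mul_assoc]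
  rcases m with _ | m
  · simp [gaussSeriesDeriv]
  rw [coeff_succ_X_mul, coeff_C_mul, coeff_geomTail_mul, map_sub, coeff_C_mul]
  rcases n with _ | n
  · simp [gaussSeriesDeriv]
  rw [gaussSeriesDeriv, coeff_mk, coeff_succ_X_mul, coeff_mk, ← gaussSeriesDeriv,
    sum_range_coeff_gaussSeries_sub]
  push_cast
  linear_combination gaussCoeff x m n * mul_recip hx n

end GaussSeries

section AlternatingWords

variable {x : ℝ}

/-- The alternating word `[…, 0, x, 0, x]` of length `m`. -/
noncomputable def alternating (x : ℝ) : ℕ → List ℝ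
  | 0 => []
  | m + 1 => (if Even m then x else 0) :: alternating x m

lemma coeff_eq_word_alternating (hx : x < 1) {f g : ℝ⟦X⟧⟦X⟧}
    (hf0 : constantCoeff f = 1) (hg0 : constantCoeff g = 0)
    (hf1 : PowerSeries.map constantCoeff f = 1) (hg1 : PowerSeries.map constantCoeff g = 0)
    (hf : eulerCoeff f = X * C geomTail * g)
    (hg : eulerCoeff g = C (C x) * g + X * C geomTail * f) (m : ℕ) :
    coeff m f = (if Even m then word (alternating x m) else 0) ∧
      coeff m g = if Even m then 0 else word (alternating x m) := by
  have hfsucc (m : ℕ) : coeff (m + 1) f = integ 0 (coeff m g) := by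
    refine eq_integ zero_lt_one ?_ ?_
    · simpa [coeff_one] using congrArg (coeff (m + 1)) hf1
    · simpa [eulerCoeff, mul_assoc, coeff_succ_X_mul] using congrArg (coeff (m + 1)) hf
  have hgsucc (m : ℕ) : coeff (m + 1) g = integ x (coeff m f) := by
    refine eq_integ hx ?_ ?_
    · simpa using congrArg (coeff (m + 1)) hg1
    · simpa [eulerCoeff, mul_assoc, coeff_succ_X_mul, smul_eq_C_mul] using
        congrArg (coeff (m + 1)) hg
  induction m with
  | zero => simp [hf0, hg0, alternating, word]
  | succ m ih =>
    rw [hfsucc, hgsucc, ih.1, ih.2, alternating]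
    by_cases hm : Even m <;> simp [hm, Nat.even_add_one, word_cons]

lemma coeff_rescale_exp_mul_gaussSeries (hx : x < 1) (m : ℕ) :
    coeff m (rescale (integ 0 1) (exp ℝ⟦X⟧) * gaussSeries x) = word (alternating x m) := by
  set E := rescale (integ 0 1) (exp ℝ⟦X⟧)
  have hE : eulerCoeff E = X * C geomTail * E := by
    rw [eulerCoeff_rescale_exp, euler_integ zero_lt_one, zero_smul, zero_add, mul_one]
  have hF := eulerCoeff_gaussSeries hx
  have hK := eulerCoeff_gaussSeriesDeriv hx
  set F := gaussSeries x
  set K := gaussSeriesDeriv x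
  have hf : eulerCoeff (E * (F - K)) = X * C geomTail * (E * K) := by
    rw [eulerCoeff_mul, eulerCoeff_sub, hE, hF, hK, map_ofNat]
    ring
  have hg : eulerCoeff (E * K) = C (C x) * (E * K) + X * C geomTail * (E * (F - K)) := by
    rw [eulerCoeff_mul, hE, hK, map_ofNat]
    ring
  have hE1 : PowerSeries.map constantCoeff E = 1 :=
    map_constantCoeff_rescale_exp (constantCoeff_integ 0 1)
  have hE0 : constantCoeff E = 1 := constantCoeff_rescale_exp _
  obtain ⟨hf', hg'⟩ := coeff_eq_word_alternating hx
    (by rw [map_mul, map_sub, hE0, constantCoeff_gaussSeries, constantCoeff_gaussSeriesDeriv]; simp)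
    (by rw [map_mul, constantCoeff_gaussSeriesDeriv, mul_zero])
    (by rw [map_mul, map_sub, hE1, map_constantCoeff_gaussSeries,
      map_constantCoeff_gaussSeriesDeriv]; simp)
    (by rw [map_mul, map_constantCoeff_gaussSeriesDeriv, mul_zero]) hf hg m
  rw [show E * F = E * (F - K) + E * K by ring, map_add, hf', hg']
  split_ifs <;> simp

lemma word_singleton_mul (hx : x < 1) {y : ℝ} (hy : y < 1) (hxy : x + y < 1) (l : List ℝ) :
    word [x] * word (y :: l) = word ((x + y) :: y :: l) + integ (x + y) (word [x] * word l) := by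
  rw [word_singleton, word_cons, integ_mul_integ hx hy hxy, one_mul, map_add]
  rfl

lemma word_singleton_mul_word_zero (hx0 : 0 ≤ x) (hx : 2 * x < 1) :
    word [x] * word [0, x] = word [x, 0, x] + 2 • word [x, 2 * x, x] := by
  have hsq : word [x] * word [x] = 2 • word [2 * x, x] := by
    convert word_singleton_mul_word_multiples hx0 1 (by push_cast; linarith) using 3 <;>
      norm_num [multiples]
  rw [word_singleton_mul (by linarith) zero_lt_one (by linarith), add_zero, hsq, map_nsmul]
  rfl

lemma word_singleton_mul_word_two_mul (hx0 : 0 ≤ x) (hx : 3 * x < 1) :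
    word [x] * word [x, 2 * x, x] =
      word [2 * x, x, 2 * x, x] + 3 • word [2 * x, 3 * x, 2 * x, x] := by
  have hthree : word [x] * word [2 * x, x] = 3 • word [3 * x, 2 * x, x] := by
    convert word_singleton_mul_word_multiples hx0 2 (by push_cast; linarith) using 3 <;>
      norm_num [multiples]
  rw [word_singleton_mul (by linarith) (by linarith) (by linarith), hthree, map_nsmul, ← two_mul]
  rfl

lemma word_zero_sq (hx0 : 0 ≤ x) (hx : 2 * x < 1) :
    word [0, x] ^ 2 = 2 • word [0, x, 0, x] + 4 • word [0, x, 2 * x, x] := by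
  rw [sq, show word [0, x] = integ 0 (word [x]) from rfl,
    integ_mul_integ zero_lt_one zero_lt_one (by simp), add_zero, mul_comm (integ 0 _), ← two_nsmul,
    ← word_cons, word_singleton_mul_word_zero hx0 hx, smul_add, smul_smul, map_add, map_nsmul,
    map_nsmul]
  rfl

lemma powerSumFour_alternating (hx0 : 0 ≤ x) (hx : 4 * x < 1) :
    powerSumFour (PowerSeries.mk fun m => word (alternating x m)) =
      24 * (word [4 * x, 3 * x, 2 * x, x] - word [2 * x, 3 * x, 2 * x, x]) -
        8 * (word [2 * x, x, 2 * x, x] - word [0, x, 2 * x, x]) := by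
  have hfourth : word [x] ^ 4 = 24 • word [4 * x, 3 * x, 2 * x, x] := by
    convert word_singleton_pow hx0 4 (by push_cast; linarith) using 2 <;>
      norm_num [multiples, Nat.factorial]
  have hAB := word_singleton_mul_word_zero hx0 (by linarith)
  have hAM := word_singleton_mul_word_two_mul hx0 (by linarith)
  have hBB := word_zero_sq hx0 (by linarith)
  have hpow : powerSumFour (PowerSeries.mk fun m => word (alternating x m)) =
      word [x] ^ 4 - 4 * word [x] ^ 2 * word [0, x] + 2 * word [0, x] ^ 2 +
        4 * word [x] * word [x, 0, x] - 4 * word [0, x, 0, x] := by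
    simp [powerSumFour, alternating, Nat.even_iff]
  simp only [nsmul_eq_mul, Nat.cast_ofNat] at hfourth hAB hAM hBB
  linear_combination hpow + hfourth - 4 * word [x] * hAB - 8 * hAM + 2 * hBB

lemma powerSumFour_gaussSeries (hx0 : 0 ≤ x) (hx : 4 * x < 1) :
    powerSumFour (gaussSeries x) =
      24 * (word [4 * x, 3 * x, 2 * x, x] - word [2 * x, 3 * x, 2 * x, x]) -
        8 * (word [2 * x, x, 2 * x, x] - word [0, x, 2 * x, x]) := by
  have hseries : rescale (integ 0 1) (exp ℝ⟦X⟧) * gaussSeries x =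
      PowerSeries.mk fun m => word (alternating x m) := by
    ext1 m
    rw [coeff_rescale_exp_mul_gaussSeries (by linarith), coeff_mk]
  rw [← powerSumFour_alternating hx0 hx, ← hseries,
    powerSumFour_mul (constantCoeff_rescale_exp _) (constantCoeff_gaussSeries x),
    powerSumFour_rescale_exp, zero_add]

end AlternatingWords

section GaussSummation

lemma tsum_eq_apply_zero_of_tendsto {f u : ℕ → ℝ} (hf : Summable f)
    (hfu : ∀ n, f n = u n - u (n + 1)) (hu : Tendsto u atTop (𝓝 0)) : ∑' n, f n = u 0 := by
  refine tendsto_nhds_unique hf.hasSum.tendsto_sum_nat ?_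
  simp only [hfu, sum_range_sub']
  simpa using hu.const_sub (u 0)

/-- The kernel `x (1-x)_n (1-x)_N / (1-x)_{n+N+1}` that interpolates between `gaussSeries x` at
`t = 1`, where `N = 0`, and the constant `1`, where `N → ∞`. -/
noncomputable def gaussKernel (x : ℝ) (N n : ℕ) : ℝ :=
  x * (∏ j ∈ range n, (j + 1 - x)) * (∏ j ∈ range N, (j + 1 - x)) *
    ∏ j ∈ range (n + N + 1), recip x j

variable {x : ℝ}

lemma gaussKernel_comm (x : ℝ) (N n : ℕ) : gaussKernel x N n = gaussKernel x n N := by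
  rw [gaussKernel, gaussKernel, add_comm n N, mul_right_comm x]

lemma gaussKernel_succ_right (x : ℝ) (N n : ℕ) :
    gaussKernel x N (n + 1) = (n + 1 - x) * recip x (n + N + 1) * gaussKernel x N n := by
  rw [gaussKernel, gaussKernel, add_right_comm n 1 N, prod_range_succ,
    prod_range_succ _ (n + N + 1)]
  ring

lemma gaussKernel_succ_left (x : ℝ) (N n : ℕ) :
    gaussKernel x (N + 1) n = (N + 1 - x) * recip x (n + N + 1) * gaussKernel x N n := by
  rw [gaussKernel_comm, gaussKernel_succ_right, gaussKernel_comm, add_comm N n]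

lemma gaussKernel_zero_right (hx : x < 1) (N : ℕ) : gaussKernel x N 0 = x * recip x N := by
  induction N with
  | zero => simp [gaussKernel]
  | succ N ih =>
    rw [gaussKernel_succ_left, ih, zero_add]
    linear_combination x * recip x (N + 1) * mul_recip hx N

lemma gaussKernel_nonneg (hx0 : 0 ≤ x) (hx : x < 1) (N n : ℕ) : 0 ≤ gaussKernel x N n := by
  have hden (k : ℕ) : 0 ≤ ∏ j ∈ range k, ((j : ℝ) + 1 - x) :=
    prod_nonneg fun j _ => (recip_den_pos hx j).le
  exact mul_nonneg (mul_nonneg (mul_nonneg hx0 (hden n)) (hden N))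
    (prod_nonneg fun j _ => (recip_pos hx j).le)

lemma antitone_gaussKernel (hx0 : 0 ≤ x) (hx : x < 1) (N : ℕ) : Antitone (gaussKernel x N) := by
  refine antitone_nat_of_succ_le fun n => ?_
  rw [gaussKernel_succ_right]
  refine mul_le_of_le_one_left (gaussKernel_nonneg hx0 hx N n) ?_
  have hle : (n : ℝ) + 1 - x ≤ (n + N + 1 : ℕ) + 1 - x := by
    push_cast
    linarith [N.cast_nonneg (α := ℝ)]
  calc (n + 1 - x) * recip x (n + N + 1)
      ≤ ((n + N + 1 : ℕ) + 1 - x) * recip x (n + N + 1) :=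
        mul_le_mul_of_nonneg_right hle (recip_pos hx _).le
    _ = 1 := mul_recip hx _

lemma gaussKernel_le (hx0 : 0 ≤ x) (hx : x < 1) (N n : ℕ) : gaussKernel x N n ≤ x * recip x N :=
  gaussKernel_zero_right hx N ▸ antitone_gaussKernel hx0 hx N n.zero_le

/-- The weights of `gaussValue`; for `N = 0` they are the weights `recip x n - recip 0 n` of
`gaussSeries`. -/
noncomputable def gaussWeight (x : ℝ) (N n : ℕ) : ℝ := recip 0 n * gaussKernel x N n

lemma gaussWeight_zero (hx : x < 1) (n : ℕ) : gaussWeight x 0 n = recip x n - recip 0 n := by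
  rw [gaussWeight, gaussKernel_comm, gaussKernel_zero_right hx, recip_sub_recip hx zero_lt_one]
  ring

lemma gaussWeight_nonneg (hx0 : 0 ≤ x) (hx : x < 1) (N n : ℕ) : 0 ≤ gaussWeight x N n :=
  mul_nonneg (recip_pos zero_lt_one n).le (gaussKernel_nonneg hx0 hx N n)

lemma gaussWeight_le (hx0 : 0 ≤ x) (hx : x < 1) (N n : ℕ) :
    gaussWeight x N n ≤ gaussWeight x 0 n := by
  refine mul_le_mul_of_nonneg_left ?_ (recip_pos zero_lt_one n).le
  rw [gaussKernel_comm x N, gaussKernel_comm x 0]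
  exact antitone_gaussKernel hx0 hx n N.zero_le

lemma isBigO_gaussWeight (hx0 : 0 ≤ x) (hx : x < 1) (N : ℕ) :
    gaussWeight x N =O[⊤] (recip 0 ^ 2) := by
  refine (isBigO_of_le ⊤ fun n => ?_).trans (isBigO_recip_sub_recip hx0 hx le_rfl zero_lt_one)
  rw [← gaussWeight_zero hx, Real.norm_of_nonneg (gaussWeight_nonneg hx0 hx N n),
    Real.norm_of_nonneg (gaussWeight_nonneg hx0 hx 0 n)]
  exact gaussWeight_le hx0 hx N n

lemma tendsto_gaussWeight (hx0 : 0 ≤ x) (hx : x < 1) (n : ℕ) :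
    Tendsto (fun N => gaussWeight x N n) atTop (𝓝 0) := by
  refine squeeze_zero (gaussWeight_nonneg hx0 hx · n)
    (fun N => mul_le_mul_of_nonneg_left (gaussKernel_le hx0 hx N n) (recip_pos zero_lt_one n).le) ?_
  simpa using ((tendsto_recip x).const_mul x).const_mul (recip 0 n)

lemma gaussWeight_sub_succ (hx : x < 1) (N n : ℕ) :
    gaussWeight x N n - gaussWeight x (N + 1) n =
      recip 0 N * (gaussKernel x N n - gaussKernel x N (n + 1)) := by
  rw [gaussWeight, gaussWeight, gaussKernel_succ_left, gaussKernel_succ_right]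
  have hden := mul_recip hx (n + N + 1)
  push_cast at hden
  linear_combination
    gaussKernel x N n * (recip x (n + N + 1) * (succ_mul_recip_zero n - succ_mul_recip_zero N) -
      (recip 0 n - recip 0 N) * hden)

lemma gaussWeight_lincomb (hx : x < 1) (N n : ℕ) :
    2 * recip 0 N * gaussWeight x N n - (recip x N + recip 0 N) * gaussWeight x (N + 1) n =
      recip 0 N * gaussKernel x N (n + 1) * (recip x n + recip 0 n) := by
  rw [gaussWeight, gaussWeight, gaussKernel_succ_left, gaussKernel_succ_right]
  have hden := mul_recip hx (n + N + 1)
  push_cast at hden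
  linear_combination
    gaussKernel x N n *
      (recip 0 n * recip x (n + N + 1) * (succ_mul_recip_zero N - mul_recip hx N) +
        recip 0 N * recip x (n + N + 1) * (succ_mul_recip_zero n - mul_recip hx n) -
          2 * recip 0 n * recip 0 N * hden)

lemma tendsto_gaussKernel_mul_gaussCoeff (hx0 : 0 ≤ x) (hx : x < 1) (N m : ℕ) :
    Tendsto (fun n => gaussKernel x N n * gaussCoeff x m n) atTop (𝓝 0) := by
  refine tendsto_mul_of_isBigO (.trans (isBigO_of_le ⊤ fun n => ?_)
    ((isBigO_recip hx0 hx).const_mul_left x)) (isBigO_gaussCoeff hx0 hx m)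
  rw [gaussKernel_comm, Real.norm_of_nonneg (gaussKernel_nonneg hx0 hx n N),
    Real.norm_of_nonneg (mul_nonneg hx0 (recip_pos hx n).le)]
  exact gaussKernel_le hx0 hx n N

lemma summable_gaussWeight_mul_gaussCoeff (hx0 : 0 ≤ x) (hx : x < 1) (N m : ℕ) :
    Summable fun n => gaussWeight x N n * gaussCoeff x m n :=
  summable_mul_of_isBigO (isBigO_gaussWeight hx0 hx N) (isBigO_gaussCoeff hx0 hx m)

/-- The series in `s` that deforms the value of `gaussSeries x` at `t = 1`, where `N = 0`, into the
constant `1`, where `N → ∞`. -/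
noncomputable def gaussValue (x : ℝ) (N : ℕ) : ℝ⟦X⟧ := PowerSeries.mk fun
  | 0 => 1
  | m + 1 => ∑' n, gaussWeight x N n * gaussCoeff x m n

lemma constantCoeff_gaussValue (x : ℝ) (N : ℕ) : constantCoeff (gaussValue x N) = 1 := by
  simp [gaussValue]

lemma coeff_succ_gaussValue (x : ℝ) (N m : ℕ) :
    coeff (m + 1) (gaussValue x N) = ∑' n, gaussWeight x N n * gaussCoeff x m n := by
  rw [gaussValue, coeff_mk]

lemma tendsto_coeff_succ_gaussValue (hx0 : 0 ≤ x) (hx : x < 1) (m : ℕ) :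
    Tendsto (fun N => coeff (m + 1) (gaussValue x N)) atTop (𝓝 0) := by
  simp only [coeff_succ_gaussValue]
  rw [← tsum_zero (α := ℝ) (β := ℕ)]
  refine tendsto_tsum_of_dominated_convergence
    (summable_gaussWeight_mul_gaussCoeff hx0 hx 0 m).norm (fun n => ?_) (.of_forall fun N n => ?_)
  · simpa using (tendsto_gaussWeight hx0 hx n).mul_const (gaussCoeff x m n)
  · rw [norm_mul, norm_mul, Real.norm_of_nonneg (gaussWeight_nonneg hx0 hx N n),
      Real.norm_of_nonneg (gaussWeight_nonneg hx0 hx 0 n)]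
    exact mul_le_mul_of_nonneg_right (gaussWeight_le hx0 hx N n) (norm_nonneg _)

lemma coeff_one_gaussValue_sub (hx0 : 0 ≤ x) (hx : x < 1) (N : ℕ) :
    coeff 1 (gaussValue x N) - coeff 1 (gaussValue x (N + 1)) = recip x N - recip 0 N := by
  have hsum (N : ℕ) := summable_gaussWeight_mul_gaussCoeff hx0 hx N 0
  have hterm (n : ℕ) : gaussWeight x N n * gaussCoeff x 0 n - gaussWeight x (N + 1) n *
      gaussCoeff x 0 n = recip 0 N * (gaussKernel x N n * gaussCoeff x 0 n) -
        recip 0 N * (gaussKernel x N (n + 1) * gaussCoeff x 0 (n + 1)) := by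
    simp only [gaussCoeff_zero]
    linear_combination gaussWeight_sub_succ hx N n
  rw [coeff_succ_gaussValue, coeff_succ_gaussValue, ← (hsum N).tsum_sub (hsum (N + 1)),
    tsum_eq_apply_zero_of_tendsto ((hsum N).sub (hsum (N + 1))) hterm
      (by simpa using (tendsto_gaussKernel_mul_gaussCoeff hx0 hx N 0).const_mul (recip 0 N)),
    gaussCoeff_zero, gaussKernel_zero_right hx, recip_sub_recip hx zero_lt_one]
  ring

lemma coeff_add_two_gaussValue_sub (hx0 : 0 ≤ x) (hx : x < 1) (N m : ℕ) :
    coeff (m + 2) (gaussValue x N) - coeff (m + 2) (gaussValue x (N + 1)) =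
      (recip x N + recip 0 N) * coeff (m + 1) (gaussValue x (N + 1)) -
        2 * recip 0 N * coeff (m + 1) (gaussValue x N) := by
  have hsum (N m : ℕ) := summable_gaussWeight_mul_gaussCoeff hx0 hx N m
  have hsummable := ((hsum N (m + 1)).sub (hsum (N + 1) (m + 1))).sub
    (((hsum (N + 1) m).mul_left (recip x N + recip 0 N)).sub
      ((hsum N m).mul_left (2 * recip 0 N)))
  have hterm (n : ℕ) : gaussWeight x N n * gaussCoeff x (m + 1) n -
      gaussWeight x (N + 1) n * gaussCoeff x (m + 1) n -
        ((recip x N + recip 0 N) * (gaussWeight x (N + 1) n * gaussCoeff x m n) -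
          2 * recip 0 N * (gaussWeight x N n * gaussCoeff x m n)) =
      recip 0 N * (gaussKernel x N n * gaussCoeff x (m + 1) n) -
        recip 0 N * (gaussKernel x N (n + 1) * gaussCoeff x (m + 1) (n + 1)) := by
    have hcoeff : gaussCoeff x (m + 1) (n + 1) =
        gaussCoeff x (m + 1) n + -(recip x n + recip 0 n) * gaussCoeff x m n :=
      sum_range_succ _ n
    rw [hcoeff]
    linear_combination gaussCoeff x (m + 1) n * gaussWeight_sub_succ hx N n +
      gaussCoeff x m n * gaussWeight_lincomb hx N n
  rw [← sub_eq_zero]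
  simp only [coeff_succ_gaussValue]
  rw [← tsum_mul_left, ← tsum_mul_left, ← (hsum N _).tsum_sub (hsum (N + 1) _),
    ← ((hsum (N + 1) m).mul_left _).tsum_sub ((hsum N m).mul_left _),
    ← ((hsum N _).sub (hsum (N + 1) _)).tsum_sub
      (((hsum (N + 1) m).mul_left _).sub ((hsum N m).mul_left _)),
    tsum_eq_apply_zero_of_tendsto hsummable hterm
      (by simpa using (tendsto_gaussKernel_mul_gaussCoeff hx0 hx N (m + 1)).const_mul (recip 0 N)),
    gaussCoeff_succ, range_zero, sum_empty, mul_zero, mul_zero]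

lemma gaussValue_telescope (hx0 : 0 ≤ x) (hx : x < 1) (N : ℕ) :
    (1 + C (2 * recip 0 N) * X) * gaussValue x N =
      (1 + C (recip x N + recip 0 N) * X) * gaussValue x (N + 1) := by
  have hcoeff (a : ℝ) (f : ℝ⟦X⟧) (m : ℕ) :
      coeff (m + 1) ((1 + C a * X) * f) = coeff (m + 1) f + a * coeff m f := by
    rw [add_mul, one_mul, mul_assoc, map_add, coeff_C_mul, coeff_succ_X_mul]
  ext m
  rcases m with _ | _ | m
  · simp [constantCoeff_gaussValue]
  · rw [hcoeff, hcoeff, coeff_zero_eq_constantCoeff_apply, coeff_zero_eq_constantCoeff_apply,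
      constantCoeff_gaussValue, constantCoeff_gaussValue]
    linear_combination coeff_one_gaussValue_sub hx0 hx N
  · rw [hcoeff, hcoeff]
    linear_combination coeff_add_two_gaussValue_sub hx0 hx N m

lemma powerSumFour_gaussValue_sub (hx0 : 0 ≤ x) (hx : x < 1) (N : ℕ) :
    powerSumFour (gaussValue x N) - powerSumFour (gaussValue x (N + 1)) =
      (recip x N + recip 0 N) ^ 4 - (2 * recip 0 N) ^ 4 := by
  have h := congrArg powerSumFour (gaussValue_telescope hx0 hx N)
  rw [powerSumFour_mul (by simp) (constantCoeff_gaussValue x N),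
    powerSumFour_mul (by simp) (constantCoeff_gaussValue x (N + 1)),
    powerSumFour_one_add_C_mul_X, powerSumFour_one_add_C_mul_X] at h
  linear_combination h

lemma tendsto_powerSumFour_gaussValue (hx0 : 0 ≤ x) (hx : x < 1) :
    Tendsto (fun N => powerSumFour (gaussValue x N)) atTop (𝓝 0) := by
  have h (m : ℕ) := tendsto_coeff_succ_gaussValue hx0 hx m
  simpa [powerSumFour] using (((((h 0).pow 4).sub ((((h 0).pow 2).const_mul 4).mul (h 1))).add
    (((h 1).pow 2).const_mul 2)).add (((h 0).const_mul 4).mul (h 2))).sub ((h 3).const_mul 4)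

lemma hasSum_powerSumFour_gaussValue (hx0 : 0 ≤ x) (hx : x < 1) :
    HasSum (fun n => (recip x n + recip 0 n) ^ 4 - (2 * recip 0 n) ^ 4)
      (powerSumFour (gaussValue x 0)) := by
  have hle (n : ℕ) : recip 0 n ≤ recip x n := by
    rw [← sub_nonneg, ← gaussWeight_zero hx]
    exact gaussWeight_nonneg hx0 hx 0 n
  have hpos (n : ℕ) : 0 ≤ recip 0 n := (recip_pos zero_lt_one n).le
  rw [hasSum_iff_tendsto_nat_of_nonneg fun n => sub_nonneg.2
    (pow_le_pow_left₀ (by linarith [hpos n]) (by linarith [hle n]) 4)]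
  simp only [← powerSumFour_gaussValue_sub hx0 hx, sum_range_sub']
  simpa using (tendsto_powerSumFour_gaussValue hx0 hx).const_sub (powerSumFour (gaussValue x 0))

end GaussSummation

section Evaluation

variable {x : ℝ}

/-- The graph of the evaluation at `x` of the real power series that converge absolutely there: the
pairs `(f, f(x))`. As a subring, it is closed under all polynomial operations. -/
def evalGraph (x : ℝ) : Subring (ℝ⟦X⟧ × ℝ) where
  carrier := {p | HasSum (fun n => coeff n p.1 * x ^ n) p.2}
  zero_mem' := by simp
  one_mem' := by
    simpa using hasSum_single (f := fun n => coeff n (1 : ℝ⟦X⟧) * x ^ n) 0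
      fun n hn => by rw [coeff_one, if_neg hn, zero_mul]
  add_mem' {p q} hp hq := by simpa [add_mul] using HasSum.add hp hq
  neg_mem' {p} hp := by simpa using HasSum.neg hp
  mul_mem' {p q} (hp : HasSum _ _) (hq : HasSum _ _) := by
    have hterm (n : ℕ) : coeff n (p * q).1 * x ^ n = ∑ kl ∈ antidiagonal n,
        coeff kl.1 p.1 * x ^ kl.1 * (coeff kl.2 q.1 * x ^ kl.2) := by
      rw [Prod.fst_mul, coeff_mul, sum_mul]
      refine sum_congr rfl fun kl hkl => ?_
      rw [← mem_antidiagonal.1 hkl, pow_add]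
      ring
    simp only [Set.mem_ofPred_eq, hterm, Prod.snd_mul, ← hp.tsum_eq, ← hq.tsum_eq]
    rw [tsum_mul_tsum_eq_tsum_sum_antidiagonal_of_summable_norm hp.summable.norm hq.summable.norm]
    exact (summable_norm_sum_mul_antidiagonal_of_summable_norm hp.summable.norm
      hq.summable.norm).of_norm.hasSum

lemma mem_evalGraph {f : ℝ⟦X⟧} {a : ℝ} :
    (f, a) ∈ evalGraph x ↔ HasSum (fun n => coeff n f * x ^ n) a := .rfl

lemma prod_mem_evalGraph {ι : Type*} {s : Finset ι} {f : ι → ℝ⟦X⟧} {a : ι → ℝ}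
    (h : ∀ i ∈ s, (f i, a i) ∈ evalGraph x) : (∏ i ∈ s, f i, ∏ i ∈ s, a i) ∈ evalGraph x := by
  have hprod : (∏ i ∈ s, f i, ∏ i ∈ s, a i) = ∏ i ∈ s, (f i, a i) :=
    Prod.ext (by rw [Prod.fst_prod]) (by rw [Prod.snd_prod])
  exact hprod ▸ prod_mem h

lemma powerSumFour_mem_evalGraph {U : ℝ⟦X⟧⟦X⟧} {V : ℝ⟦X⟧}
    (h : ∀ m, (coeff m U, coeff m V) ∈ evalGraph x) :
    (powerSumFour U, powerSumFour V) ∈ evalGraph x := by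
  let W : (evalGraph x)⟦X⟧ := PowerSeries.mk fun m => ⟨_, h m⟩
  have hU : PowerSeries.map ((RingHom.fst _ _).comp (evalGraph x).subtype) W = U := by
    ext1 m
    simp [W]
  have hV : PowerSeries.map ((RingHom.snd _ _).comp (evalGraph x).subtype) W = V := by
    ext1 m
    simp [W]
  rw [← hU, ← hV, ← map_powerSumFour, ← map_powerSumFour]
  exact (powerSumFour W).2

lemma coeff_gaussSeries_mem_evalGraph (hx0 : 0 ≤ x) (hx : x < 1) (m : ℕ) :
    (coeff m (gaussSeries x), coeff m (gaussValue x 0)) ∈ evalGraph 1 := by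
  rcases m with _ | m
  · simp [constantCoeff_gaussSeries, constantCoeff_gaussValue, ← Prod.one_eq_mk, one_mem]
  · rw [coeff_succ_gaussValue, mem_evalGraph, ← hasSum_nat_add_iff' 1]
    simpa [gaussSeries, coeff_succ_X_mul, gaussWeight_zero hx] using
      (summable_gaussWeight_mul_gaussCoeff hx0 hx 0 m).hasSum

lemma hasSum_strictSum_powerSumFour_gaussValue (hx0 : 0 ≤ x) (hx : 4 * x < 1) :
    HasSum (fun n => 24 * ((recip (4 * x) n - recip (2 * x) n) *
        strictSum [recip (3 * x), recip (2 * x), recip x] n) -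
      8 * ((recip (2 * x) n - recip 0 n) * strictSum [recip x, recip (2 * x), recip x] n))
      (powerSumFour (gaussValue x 0)) := by
  have h := powerSumFour_mem_evalGraph (coeff_gaussSeries_mem_evalGraph hx0 (by linarith))
  rw [powerSumFour_gaussSeries hx0 hx, mem_evalGraph, ← hasSum_nat_add_iff' 1,
    ← map_ofNat (C (R := ℝ)) 24, ← map_ofNat (C (R := ℝ)) 8] at h
  simp only [map_sub, coeff_C_mul, coeff_succ_word_cons, List.map_cons, List.map_nil, one_pow,
    mul_one, range_one, sum_singleton, coeff_zero_eq_constantCoeff_apply, constantCoeff_word_cons,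
    mul_zero, sub_zero, ← sub_mul] at h
  exact h

end Evaluation

section NestedSums

lemma strictAnti_cons {d m : ℕ} {k : Fin d → ℕ} (hm : ∀ i, k i < m) (hk : StrictAnti k) :
    StrictAnti (Fin.cons m k : Fin (d + 1) → ℕ) := by
  intro i j hij
  obtain ⟨j, rfl⟩ := Fin.exists_succ_eq.2 (Fin.ne_zero_of_lt hij)
  cases i using Fin.cases with
  | zero => exact hm j
  | succ i => exact hk (Fin.succ_lt_succ_iff.1 hij)

lemma strictSum_ofFn {d : ℕ} (f : Fin d → ℕ → ℝ) (n : ℕ) :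
    strictSum (List.ofFn f) n =
      ∑ k ∈ Fintype.piFinset fun _ => range n, if StrictAnti k then ∏ i, f i (k i) else 0 := by
  simp only [← sum_filter]
  induction d generalizing n with
  | zero => simp [strictSum, Subsingleton.strictAnti]
  | succ d ih =>
    rw [List.ofFn_succ, strictSum]
    simp only [ih, mul_sum]
    rw [sum_sigma']
    refine sum_nbij' (fun p => Fin.cons p.1 p.2) (fun k => ⟨k 0, Fin.tail k⟩) ?_ ?_ ?_ ?_ ?_
    · rintro ⟨m, k⟩ h
      simp only [mem_sigma, mem_range, mem_filter, Fintype.mem_piFinset] at h ⊢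
      obtain ⟨hm, hk, hanti⟩ := h
      exact ⟨Fin.cases hm fun i => (hk i).trans hm, strictAnti_cons hk hanti⟩
    · intro k h
      simp only [mem_sigma, mem_range, mem_filter, Fintype.mem_piFinset] at h ⊢
      exact ⟨h.1 0, fun i => h.2 i.succ_pos, fun i j hij => h.2 (Fin.succ_lt_succ_iff.2 hij)⟩
    · rintro ⟨m, k⟩ -
      simp
    · rintro k -
      simp
    · rintro ⟨m, k⟩ -
      simp [Fin.prod_univ_succ]

lemma hasSum_of_tendsto_sum_of_nonneg {ι : Type*} {f : ι → ℝ} {s : ℕ → Finset ι} {S : ℝ}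
    (hf : 0 ≤ f) (hs : Tendsto s atTop atTop) (hS : Tendsto (fun n => ∑ i ∈ s n, f i) atTop (𝓝 S)) :
    HasSum f S := by
  have hle (u : Finset ι) : ∑ i ∈ u, f i ≤ S := ge_of_tendsto hS <|
    (hs.eventually_ge_atTop u).mono fun n hn => sum_le_sum_of_subset_of_nonneg hn fun i _ _ => hf i
  have hsum := (summable_of_sum_le hf hle).hasSum
  exact tendsto_nhds_unique (hsum.comp hs) hS ▸ hsum

lemma hasSum_strictAnti {d : ℕ} {f : Fin (d + 1) → ℕ → ℝ} {S : ℝ} (hf : ∀ i n, 0 ≤ f i n)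
    (hS : HasSum (fun n => f 0 n * strictSum (List.ofFn (Fin.tail f)) n) S) :
    HasSum (fun k : {k : Fin (d + 1) → ℕ // StrictAnti k ∧ ∀ i, 0 < k i} =>
      ∏ i, f i (k.1 i - 1)) S := by
  set F : (Fin (d + 1) → ℕ) → ℝ := fun k => if StrictAnti k then ∏ i, f i (k i) else 0 with hF
  have hFS : HasSum F S := by
    refine hasSum_of_tendsto_sum_of_nonneg (s := fun n => Fintype.piFinset fun _ => range n)
      (fun k => ?_) ?_ ?_
    · rw [hF]
      dsimp only
      split_ifs
      exacts [prod_nonneg fun i _ => hf i _, le_rfl]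
    · refine tendsto_atTop_finset_of_monotone
        (fun m n hmn => Fintype.piFinset_subset _ _ fun _ => range_subset_range.2 hmn) fun k =>
          ⟨∑ i, k i + 1, Fintype.mem_piFinset.2 fun i => mem_range.2 (Nat.lt_succ_of_le
            (single_le_sum (fun _ _ => Nat.zero_le _) (mem_univ i)))⟩
    · simp only [hF, ← strictSum_ofFn, List.ofFn_succ]
      exact hS.tendsto_sum_nat
  let pred (k : {k : Fin (d + 1) → ℕ // StrictAnti k ∧ ∀ i, 0 < k i}) (i : Fin (d + 1)) : ℕ :=
    k.1 i - 1
  have hpred (k) : StrictAnti (pred k) := fun i j hij =>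
    Nat.sub_lt_sub_right (k.2.2 j) (k.2.1 hij)
  have hinj : Function.Injective pred := fun k l hkl => Subtype.ext <| funext fun i =>
    Nat.sub_one_cancel (k.2.2 i) (l.2.2 i) (congrFun hkl i)
  have hrange : ∀ k ∉ Set.range pred, F k = 0 := fun k hk => if_neg fun hanti =>
    hk ⟨⟨fun i => k i + 1, fun i j hij => Nat.succ_lt_succ (hanti hij),
      fun i => Nat.succ_pos _⟩, rfl⟩
  refine ((hinj.hasSum_iff hrange).2 hFS).congr_fun ?_
  exact fun k => (if_pos (hpred k)).symm

end NestedSums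

section MultipleZeta

lemma coeff_prod_univ {ι : Type*} [Fintype ι] [DecidableEq ι] (f : ι → ℝ⟦X⟧) (s : ℕ) :
    coeff s (∏ i, f i) = ∑ l ∈ piAntidiag univ s, ∏ i, coeff (l i) (f i) := by
  rw [coeff_prod]
  exact sum_equiv Finsupp.equivFunOnFinite (by simp) (by simp)

lemma hasSum_tsum_of_nonneg {ι κ : Type*} {f : ι → κ → ℝ} {g : ι → ℝ} {S : ℝ}
    (hf : ∀ i j, 0 ≤ f i j) (hg : ∀ i, HasSum (f i) (g i)) (hS : HasSum g S) :
    (∀ j, Summable fun i => f i j) ∧ HasSum (fun j => ∑' i, f i j) S := by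
  have hsum : Summable fun p : ι × κ => f p.1 p.2 := by
    refine (summable_prod_of_nonneg fun p => hf p.1 p.2).2 ⟨fun i => (hg i).summable, ?_⟩
    simpa only [(hg _).tsum_eq] using hS.summable
  have hswap : HasSum (fun p : κ × ι => f p.2 p.1) S := by
    rw [← (hsum.hasSum.prod_fiberwise hg).unique hS]
    exact (Equiv.prodComm κ ι).hasSum_iff.2 hsum.hasSum
  have hfiber (j : κ) : Summable fun i => f i j := hswap.summable.prod_factor j
  exact ⟨hfiber, hswap.prod_fiberwise fun j => (hfiber j).hasSum⟩

lemma hasSum_sum_mul_mzv_mul_pow {d : ℕ} {x S : ℝ} (hx : 0 < x) {e : Fin (d + 1) → ℕ}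
    {c A : Fin (d + 1) → ℕ → ℝ} (hc : ∀ i j, 0 ≤ c i j)
    (hA : ∀ i (n : ℕ), HasSum (fun j => c i j * (x ^ j / ((n : ℝ) + 1) ^ (j + e i))) (A i n))
    (hS : HasSum (fun n => A 0 n * strictSum (List.ofFn (Fin.tail A)) n) S) :
    HasSum (fun s => (∑ l ∈ piAntidiag univ s, (∏ i, c i (l i)) * mzv (l + e)) * x ^ s) S := by
  let t (l : Fin (d + 1) → ℕ) (k : {k : Fin (d + 1) → ℕ // StrictAnti k ∧ ∀ i, 0 < k i}) : ℝ :=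
    (∏ i, c i (l i)) * ∏ i, 1 / (k.1 i : ℝ) ^ (l + e) i
  have ht (l k) : 0 ≤ t l k :=
    mul_nonneg (prod_nonneg fun i _ => hc i _) (prod_nonneg fun i _ => by positivity)
  have hA0 (i n) : 0 ≤ A i n := (hA i n).nonneg fun j => mul_nonneg (hc i j) (by positivity)
  have hprod (k) : HasSum (fun s => (∑ l ∈ piAntidiag univ s, t l k) * x ^ s)
      (∏ i, A i (k.1 i - 1)) := by
    have hmem : (∏ i, (PowerSeries.mk fun j => c i j / (k.1 i : ℝ) ^ (j + e i)),
        ∏ i, A i (k.1 i - 1)) ∈ evalGraph x := by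
      refine prod_mem_evalGraph fun i _ => mem_evalGraph.2 ?_
      have hk : ((k.1 i - 1 : ℕ) + 1 : ℝ) = k.1 i := mod_cast Nat.sub_add_cancel (k.2.2 i)
      refine (hA i (k.1 i - 1)).congr_fun fun j => ?_
      rw [hk, coeff_mk]
      ring
    refine (mem_evalGraph.1 hmem).congr_fun fun s => ?_
    simp only [coeff_prod_univ, coeff_mk, t, ← prod_mul_distrib, mul_one_div, Pi.add_apply]
  obtain ⟨hsum, hS'⟩ := hasSum_tsum_of_nonneg
    (fun k s => mul_nonneg (sum_nonneg fun l _ => ht l k) (pow_pos hx s).le) hprod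
    (hasSum_strictAnti hA0 hS)
  refine hS'.congr_fun fun s => ?_
  have hsum_t (l) (hl : l ∈ piAntidiag univ s) : Summable (t l) :=
    ((summable_mul_right_iff (pow_pos hx s).ne').1 (hsum s)).of_nonneg_of_le (ht l) fun k =>
      single_le_sum (f := fun l => t l k) (fun l _ => ht l k) hl
  rw [tsum_mul_right, Summable.tsum_finsetSum hsum_t]
  simp only [t, tsum_mul_left, mzv]

end MultipleZeta

section Uniqueness

lemma eq_of_hasSum_mul_pow {a b : ℕ → ℝ} {S : ℝ → ℝ} {r : ℝ} (hr : 0 < r)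
    (ha : ∀ x, 0 < x → x < r → HasSum (fun n => a n * x ^ n) (S x))
    (hb : ∀ x, 0 < x → x < r → HasSum (fun n => b n * x ^ n) (S x)) : a = b := by
  set p := FormalMultilinearSeries.ofScalars ℝ (a - b) with hp
  have hsum (x : ℝ) (hx0 : 0 < x) (hx : x < r) : HasSum (fun n => (a - b) n * x ^ n) 0 := by
    simpa [sub_mul] using (ha x hx0 hx).sub (hb x hx0 hx)
  have hzero (x : ℝ) (hx0 : 0 < x) (hx : x < r) : p.sum x = 0 := by
    simpa [FormalMultilinearSeries.sum, hp, mul_comm] using (hsum x hx0 hx).tsum_eq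
  have hradius : 0 < p.radius := by
    refine lt_of_lt_of_le ?_ (p.le_radius_of_summable_norm (r := (r / 2).toNNReal) ?_)
    · simpa using hr
    · simpa [hp, (half_pos hr).le, abs_of_pos hr] using
        (hsum (r / 2) (half_pos hr) (half_lt_self hr)).summable.norm
  have hfps := (p.hasFPowerSeriesOnBall hradius).hasFPowerSeriesAt
  have hfreq : ∃ᶠ x in 𝓝[≠] (0 : ℝ), p.sum x = 0 :=
    Frequently.filter_mono (Eventually.frequently <|
      mem_of_superset (Ioo_mem_nhdsGT hr) fun x hx => hzero x hx.1 hx.2) (nhdsGT_le_nhdsNE 0)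
  have hp0 := (hfps.congr (hfps.analyticAt.frequently_zero_iff_eventually_zero.1 hfreq)).eq_zero
  exact sub_eq_zero.1 ((FormalMultilinearSeries.ofScalars_series_eq_zero ℝ).1 hp0)

end Uniqueness

section WeightedSum

variable {x y : ℝ}

lemma hasSum_choose_mul_pow_div (hy : |y| < 1) (k n : ℕ) :
    HasSum (fun j => ((j + k).choose k : ℝ) * (y ^ j / ((n : ℝ) + 1) ^ (j + (k + 1))))
      (recip y n ^ (k + 1)) := by
  have hn : (0 : ℝ) < n + 1 := by positivity
  have hy' : ‖y / (n + 1)‖ < 1 := by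
    rw [norm_div, Real.norm_eq_abs, Real.norm_of_nonneg hn.le, div_lt_one hn]
    exact hy.trans_le (by simp)
  have hval : 1 / (1 - y / (n + 1)) ^ (k + 1) / ((n : ℝ) + 1) ^ (k + 1) = recip y n ^ (k + 1) := by
    rw [recip, div_div, ← mul_pow, sub_mul, one_mul, div_mul_cancel₀ y hn.ne', one_div, inv_pow]
  rw [← hval]
  refine ((hasSum_choose_mul_geometric_of_norm_lt_one k hy').div_const _).congr_fun fun j => ?_
  rw [div_pow, pow_add, mul_div_assoc, div_div]

lemma hasSum_pow_mul_pow_div {c : ℝ} (hc : 0 ≤ c) (hx : 0 < x) (hcx : c * x < 1) (n : ℕ) :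
    HasSum (fun j => c ^ j * (x ^ j / ((n : ℝ) + 1) ^ (j + 1))) (recip (c * x) n) := by
  have h := hasSum_choose_mul_pow_div (abs_lt.2 ⟨by nlinarith, hcx⟩) 0 n
  simpa [mul_pow, mul_div_assoc] using h

/-- The coefficient of `z ^ j` in `(1 / (1 - z) + 1) ^ 4 - 2 ^ 4`: half of it is the factor of
`ζ(j + 4)` in the sum formula. -/
def quarticCoeff (j : ℕ) : ℝ :=
  (j + 3).choose 3 + 4 * (j + 2).choose 2 + 6 * (j + 1).choose 1 + 4 - 15 * 0 ^ j

lemma quarticCoeff_nonneg (j : ℕ) : 0 ≤ quarticCoeff j := by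
  cases j with
  | zero => norm_num [quarticCoeff]
  | succ j =>
    rw [quarticCoeff, zero_pow j.succ_ne_zero, mul_zero, sub_zero]
    positivity

lemma quarticCoeff_of_ne_zero {j : ℕ} (hj : j ≠ 0) :
    quarticCoeff j = 4 + (j + 1) * (j + 6) * (j + 11) / 6 := by
  have h2 : ((j + 2).choose 2 : ℝ) = (j + 2) * (j + 1) / 2 := by
    rw [Nat.cast_choose_two]
    push_cast
    ring
  have h3 : ((j + 3).choose 3 : ℝ) = (j + 3) * ((j + 2).choose 2) / 3 := by
    have h : ((j + 3) * (j + 2).choose 2 : ℝ) = (j + 3).choose 3 * 3 :=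
      mod_cast Nat.add_one_mul_choose_eq (j + 2) 2
    linarith
  rw [quarticCoeff, h3, h2, Nat.choose_one_right, zero_pow hj]
  push_cast
  ring

lemma hasSum_quarticCoeff_mul_pow_div (hx0 : 0 < x) (hx : x < 1) (n : ℕ) :
    HasSum (fun j => quarticCoeff j * (x ^ j / ((n : ℝ) + 1) ^ (j + 4)))
      ((recip x n + recip 0 n) ^ 4 - (2 * recip 0 n) ^ 4) := by
  have hchoose := hasSum_choose_mul_pow_div (abs_lt.2 ⟨by linarith, hx⟩ : |x| < 1) (n := n)
  have hzero := hasSum_pow_mul_pow_div le_rfl hx0 (by simp) n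
  have hbinomial : (recip x n + recip 0 n) ^ 4 - (2 * recip 0 n) ^ 4 =
      recip x n ^ (3 + 1) + 4 * recip 0 n * recip x n ^ (2 + 1) +
        6 * recip 0 n ^ 2 * recip x n ^ (1 + 1) + 4 * recip 0 n ^ 3 * recip x n ^ (0 + 1) -
          15 * recip 0 n ^ 3 * recip (0 * x) n := by
    rw [zero_mul]
    ring
  rw [hbinomial]
  refine (((((hchoose 3).add ((hchoose 2).mul_left _)).add ((hchoose 1).mul_left _)).add
    ((hchoose 0).mul_left _)).sub (hzero.mul_left _)).congr_fun fun j => ?_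
  simp only [quarticCoeff, recip, sub_zero]
  field_simp
  push_cast [Nat.choose_zero_right]
  ring

lemma hasSum_quarticCoeff_mul_mzv_mul_pow (hx0 : 0 < x) (hx : x < 1) :
    HasSum (fun s => quarticCoeff s * mzv ![s + 4] * x ^ s) (powerSumFour (gaussValue x 0)) := by
  have hS := hasSum_powerSumFour_gaussValue hx0.le hx
  have h := hasSum_sum_mul_mzv_mul_pow hx0 (fun _ : Fin 1 => quarticCoeff_nonneg) (e := ![4])
    (A := fun _ n => (recip x n + recip 0 n) ^ 4 - (2 * recip 0 n) ^ 4)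
    (by simpa using hasSum_quarticCoeff_mul_pow_div hx0 hx)
    (by simpa [strictSum] using hS)
  refine h.congr_fun fun s => ?_
  rw [piAntidiag_univ_fin_eq_antidiagonalTuple, Nat.antidiagonalTuple_one, sum_singleton]
  simp

variable {d : ℕ} {a b : ℝ} {γ : Fin d → ℝ}

lemma summable_recip_sub_recip_mul_strictSum (hx0 : 0 ≤ x) (hb : 0 ≤ b) (hba : b ≤ a)
    (hax : a * x < 1) (hγ : ∀ i, 0 ≤ γ i) (hγa : ∀ i, γ i ≤ a) :
    Summable fun n => (recip (a * x) n - recip (b * x) n) *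
      strictSum (List.ofFn fun i => recip (γ i * x)) n := by
  have hletter {c} (hc : 0 ≤ c) (hca : c ≤ a) : 0 ≤ c * x ∧ c * x < 1 :=
    ⟨mul_nonneg hc hx0, (mul_le_mul_of_nonneg_right hca hx0).trans_lt hax⟩
  have ⟨hbx0, hbx⟩ := hletter hb hba
  refine summable_mul_of_isBigO
    (isBigO_recip_sub_recip (hbx0.trans (mul_le_mul_of_nonneg_right hba hx0)) hax hbx0 hbx)
    (isBigO_strictSum ((List.forall_mem_ofFn_iff (P := (· =O[⊤] recip 0))).2 fun i => ?_))
  exact isBigO_recip (hletter (hγ i) (hγa i)).1 (hletter (hγ i) (hγa i)).2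

lemma exists_hasSum_mzv_and_hasSum_strictSum (hx0 : 0 < x) (hb : 0 ≤ b) (hba : b ≤ a)
    (hax : a * x < 1) (hγ : ∀ i, 0 ≤ γ i) (hγa : ∀ i, γ i ≤ a) :
    ∃ S, HasSum (fun s => (∑ l ∈ piAntidiag (univ : Finset (Fin (d + 1))) s,
        ((a ^ l 0 - b ^ l 0) * ∏ i, γ i ^ l i.succ) * mzv (l + 1)) * x ^ s) S ∧
      HasSum (fun n => (recip (a * x) n - recip (b * x) n) *
        strictSum (List.ofFn fun i => recip (γ i * x)) n) S := by
  have hS := (summable_recip_sub_recip_mul_strictSum hx0.le hb hba hax hγ hγa).hasSum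
  refine ⟨_, ?_, hS⟩
  have hgeom {c} (hc : 0 ≤ c) (hca : c ≤ a) := hasSum_pow_mul_pow_div hc hx0
    ((mul_le_mul_of_nonneg_right hca hx0.le).trans_lt hax)
  have hhead (n) := (hgeom (hb.trans hba) le_rfl n).sub (hgeom hb hba n)
  have h := hasSum_sum_mul_mzv_mul_pow hx0 (e := 1)
    (c := Fin.cons (fun j => a ^ j - b ^ j) fun i j => γ i ^ j)
    (A := Fin.cons (fun n => recip (a * x) n - recip (b * x) n) fun i => recip (γ i * x))
    (Fin.cases (fun j => sub_nonneg.2 (pow_le_pow_left₀ hb hba j)) fun i j => pow_nonneg (hγ i) j)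
    (Fin.cases (fun n => by simpa [sub_mul] using hhead n) fun i => hgeom (hγ i) (hγa i)) hS
  simpa [Fin.prod_univ_succ] using h

/-- The weight of `ζ(l + 1)` in the sum formula, in terms of the shifted exponents `l`. It vanishes
when `l 0 = 0`, that is when the multiple zeta series diverges. -/
def weight (l : Fin 4 → ℕ) : ℝ :=
  12 * ((4 ^ l 0 - 2 ^ l 0) * 3 ^ l 1 * 2 ^ l 2) - 4 * ((2 ^ l 0 - 0 ^ l 0) * 2 ^ l 2)

lemma hasSum_weight_mul_mzv_mul_pow (hx0 : 0 < x) (hx : 4 * x < 1) :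
    HasSum (fun s => (2 * ∑ l ∈ piAntidiag univ s, weight l * mzv (l + 1)) * x ^ s)
      (powerSumFour (gaussValue x 0)) := by
  obtain ⟨S, hgen, hS⟩ := exists_hasSum_mzv_and_hasSum_strictSum (γ := ![3, 2, 1]) hx0 zero_le_two
    (by norm_num) hx (by simp [Fin.forall_fin_succ]) (by norm_num [Fin.forall_fin_succ])
  obtain ⟨S', hgen', hS'⟩ := exists_hasSum_mzv_and_hasSum_strictSum (γ := ![1, 2, 1]) hx0 le_rfl
    zero_le_two (by linarith) (by simp [Fin.forall_fin_succ]) (by norm_num [Fin.forall_fin_succ])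
  have hval : 24 * S - 8 * S' = powerSumFour (gaussValue x 0) :=
    ((hS.mul_left 24).sub (hS'.mul_left 8)).unique
      (by simpa using hasSum_strictSum_powerSumFour_gaussValue hx0.le hx)
  refine hval ▸ ((hgen.mul_left 24).sub (hgen'.mul_left 8)).congr_fun fun s => ?_
  simp only [← mul_assoc, ← sub_mul, mul_sum, ← sum_sub_distrib]
  refine congrArg (· * x ^ s) (sum_congr rfl fun l _ => congrArg (· * mzv (l + 1)) ?_)
  simp only [weight, Fin.prod_univ_three, Matrix.cons_val, one_pow, Fin.succ_zero_eq_one,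
    Fin.succ_one_eq_two]
  ring

lemma sum_weight_mul_mzv (s : ℕ) :
    2 * ∑ l ∈ piAntidiag univ s, weight l * mzv (l + 1) = quarticCoeff s * mzv ![s + 4] :=
  congrFun (eq_of_hasSum_mul_pow (r := 1 / 4) (by norm_num)
    (fun x hx0 hx => hasSum_weight_mul_mzv_mul_pow hx0 (by linarith))
    fun x hx0 hx => hasSum_quarticCoeff_mul_mzv_mul_pow hx0 (by linarith)) s

lemma weight_sub_one {a b c d : ℕ} (ha : 2 ≤ a) (hb : 1 ≤ b) (hc : 1 ≤ c) :
    weight ![a - 1, b - 1, c - 1, d] = 2 ^ (a + c) * (2 ^ (a - 1) * 3 ^ b - 3 ^ b - 1) := by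
  obtain ⟨a, rfl⟩ := Nat.exists_eq_add_of_le' ha
  obtain ⟨b, rfl⟩ := Nat.exists_eq_add_of_le' hb
  obtain ⟨c, rfl⟩ := Nat.exists_eq_add_of_le' hc
  have h4 : (4 : ℝ) ^ (a + 1) = 2 ^ (a + 1) * 2 ^ (a + 1) := by
    rw [← mul_pow]
    norm_num
  simp only [weight, Matrix.cons_val, Nat.add_succ_sub_one, h4, zero_pow a.succ_ne_zero]
  ring

lemma weight_sub_one_mul_mzv {a b c d : ℕ} (ha : 2 ≤ a) (hb : 1 ≤ b) (hc : 1 ≤ c) (hd : 1 ≤ d) :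
    weight ![a - 1, b - 1, c - 1, d - 1] * mzv (![a - 1, b - 1, c - 1, d - 1] + 1) =
      2 ^ (a + c) * (2 ^ (a - 1) * 3 ^ b - 3 ^ b - 1) * mzv ![a, b, c, d] := by
  have hexp : (![a - 1, b - 1, c - 1, d - 1] + 1 : Fin 4 → ℕ) = ![a, b, c, d] := by
    ext i
    fin_cases i <;>
      simp only [Pi.add_apply, Pi.one_apply, Fin.reduceFinMk, Matrix.cons_val] <;> omega
  rw [weight_sub_one ha hb hc, hexp]

lemma sum_Icc_eq_sum_piAntidiag {w : ℕ} (f : (Fin 4 → ℕ) → ℝ)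
    (hf : ∀ l, l 0 = 0 → f l = 0) :
    ∑ a ∈ Icc 2 (w - 3), ∑ b ∈ Icc 1 (w - a - 2), ∑ c ∈ Icc 1 (w - a - b - 1),
      f ![a - 1, b - 1, c - 1, w - a - b - c - 1] = ∑ l ∈ piAntidiag univ (w - 4), f l := by
  simp only [sum_sigma']
  refine sum_of_injOn
    (fun p => ![p.1 - 1, p.2.1 - 1, p.2.2 - 1, w - p.1 - p.2.1 - p.2.2 - 1]) ?_ ?_ ?_ ?_
  · rintro ⟨a, b, c⟩ hp ⟨a', b', c'⟩ hp' h
    simp only [mem_coe, mem_sigma, mem_Icc] at hp hp'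
    simp only [Matrix.vecCons_inj] at h
    obtain rfl : a = a' := by omega
    obtain rfl : b = b' := by omega
    obtain rfl : c = c' := by omega
    rfl
  · rintro ⟨a, b, c⟩ hp
    simp only [mem_coe, mem_sigma, mem_Icc] at hp
    simp only [mem_coe, mem_piAntidiag, Fin.sum_univ_four, Matrix.cons_val, mem_univ, implies_true,
      and_true]
    omega
  · intro l hl hl'
    simp only [mem_piAntidiag, Fin.sum_univ_four, mem_univ, implies_true, and_true] at hl
    refine hf l (by_contra fun h0 => hl' ⟨⟨l 0 + 1, l 1 + 1, l 2 + 1⟩, ?_, ?_⟩)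
    · simp only [mem_coe, mem_sigma, mem_Icc]
      omega
    · ext i
      fin_cases i <;> simp only [Fin.reduceFinMk, Matrix.cons_val] <;> omega
  · exact fun _ _ => rfl

end WeightedSum

theorem weighted_sum_depth4_432 (w : ℕ) (hw : 5 ≤ w) :
    (∑ a ∈ Finset.Icc 2 (w - 3), ∑ b ∈ Finset.Icc 1 (w - a - 2),
      ∑ c ∈ Finset.Icc 1 (w - a - b - 1),
        (2 : ℝ) ^ (a + c) * ((2 : ℝ) ^ (a - 1) * (3 : ℝ) ^ b - (3 : ℝ) ^ b - 1) *
          mzv ![a, b, c, w - a - b - c])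
    = (2 + ((w : ℝ) - 3) * ((w : ℝ) + 2) * ((w : ℝ) + 7) / 12) * mzv ![w] := by
  have hterm : ∀ a ∈ Icc 2 (w - 3), ∀ b ∈ Icc 1 (w - a - 2), ∀ c ∈ Icc 1 (w - a - b - 1),
      (2 : ℝ) ^ (a + c) * (2 ^ (a - 1) * 3 ^ b - 3 ^ b - 1) * mzv ![a, b, c, w - a - b - c] =
        weight ![a - 1, b - 1, c - 1, w - a - b - c - 1] *
          mzv (![a - 1, b - 1, c - 1, w - a - b - c - 1] + 1) := by
    intro a ha b hb c hc
    rw [mem_Icc] at ha hb hc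
    exact (weight_sub_one_mul_mzv ha.1 hb.1 hc.1 (by omega)).symm
  rw [sum_congr rfl fun a ha => sum_congr rfl fun b hb => sum_congr rfl (hterm a ha b hb),
    sum_Icc_eq_sum_piAntidiag (fun l => weight l * mzv (l + 1)) fun l hl => by simp [weight, hl]]
  have hsum := sum_weight_mul_mzv (w - 4)
  rw [quarticCoeff_of_ne_zero (by omega), Nat.sub_add_cancel (by omega),
    Nat.cast_sub (by omega)] at hsum
  push_cast at hsum
  linear_combination hsum / 2
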